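/- Let β > 2 and let (α_N) be a sequence with α_N > 0, α_N → 0 and N·α_N → ∞. Then, as N → ∞ through even integers, the pushforward of the Gibbs measure μ_{N,α_N,β} under the map σ ↦ (m₁(σ), m₂(σ)) converges weakly in the space of probability measures on ℝ² to the two-point mixture (1/2)(δ_{(m⁺(β/2), m⁺(β/2))} + δ_{(m⁻(β/2), m⁻(β/2))}). -/

import Mathlib

open MeasureTheory Filter

noncomputable section

/-- The spin value ±1 associated to a Boolean. -/
def spinVal (s : Bool) : ℝ := if s then 1 else -1

/-- A spin configuration on `N = 2n` sites, split into the two blocks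
`B₁` (first component) and `B₂` (second component); the perfect matching
pairs the `i`-th spin of `B₁` with the `i`-th spin of `B₂`. -/
abbrev TwoConf (n : ℕ) := (Fin n → Bool) × (Fin n → Bool)

/-- Block magnetization `m₁(σ) = (2/N) ∑_{i ∈ B₁} σᵢ` with `N = 2n`. -/
def mag1 (n : ℕ) (σ : TwoConf n) : ℝ := (2 / (2 * n : ℝ)) * ∑ i, spinVal (σ.1 i)

/-- Block magnetization `m₂(σ) = (2/N) ∑_{i ∈ B₂} σᵢ` with `N = 2n`. -/
def mag2 (n : ℕ) (σ : TwoConf n) : ℝ := (2 / (2 * n : ℝ)) * ∑ i, spinVal (σ.2 i)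

/-- The Hamiltonian
`H_{N,α,β}(σ) = −(β/(2N))(∑_{i,j∈B₁} σᵢσⱼ + ∑_{i,j∈B₂} σᵢσⱼ) − α ∑_{i∈B₁} σᵢ σ_{i+N/2}`
with `N = 2n`. -/
def twoH (n : ℕ) (α β : ℝ) (σ : TwoConf n) : ℝ :=
  -(β / (2 * (2 * n : ℝ))) *
      ((∑ i, ∑ j, spinVal (σ.1 i) * spinVal (σ.1 j)) +
        ∑ i, ∑ j, spinVal (σ.2 i) * spinVal (σ.2 j))
    - α * ∑ i, spinVal (σ.1 i) * spinVal (σ.2 i)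

/-- The distribution of the magnetization vector `(m₁, m₂)` under the Gibbs measure
`μ_{N,α,β}`, i.e. the pushforward of the Gibbs measure under `σ ↦ (m₁(σ), m₂(σ))`. -/
def twoMagDist (n : ℕ) (α β : ℝ) : Measure (ℝ × ℝ) :=
  (∑ σ : TwoConf n, ENNReal.ofReal (Real.exp (-twoH n α β σ)))⁻¹ •
    ∑ σ : TwoConf n,
      ENNReal.ofReal (Real.exp (-twoH n α β σ)) • Measure.dirac (mag1 n σ, mag2 n σ)

/-!
Replacing the energy `b n m² / 2` of a block by its tangent line at `m = v` bounds the weight of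
`{m = v}` by the `n`-th power of `exp (-b v² / 2) * 2 cosh (b v)`, and the partition function of
the block is at least the largest such power. That factor is maximal only at `v = ± m⁺`, so both
`|m₁|` and `|m₂|` concentrate at `m⁺`; as `α_N → 0`, the coupling between the blocks only costs
a subexponential factor.

It remains to rule out opposite signs. Fix the first block and write `T` for the overlap
`∑ᵢ σᵢ τᵢ`. Exchanging two spins of `τ` preserves its magnetization and changes `T` by at most `4`,
so averaging over the exchanges shows that, up to the error `n (exp (4 α) - 1)`, the mean of `T` is
`n m₁ m₂`, which is at most `-n d` when `m₁ m₂ ≤ -d`. Flipping `τ` turns `exp (α T)` into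
`exp (-α T) ≥ (1 - 2 α T) exp (α T)`, so the configurations with `m₁ m₂ ≤ -d` gain at least the
factor `1 + 2 α n (d - (exp (4 α) - 1)) → ∞` and are negligible. Global spin-flip symmetry then
gives both aligned phases the weight `1 / 2`.
-/

open scoped Pointwise Topology

section MeanField

theorem hasDerivAt_tanh (x : ℝ) : HasDerivAt Real.tanh (Real.cosh x ^ 2)⁻¹ x := by
  have htanh : Real.tanh = Real.sinh / Real.cosh := funext Real.tanh_eq_sinh_div_cosh
  rw [htanh]
  refine ((Real.hasDerivAt_sinh x).div (Real.hasDerivAt_cosh x)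
    (Real.cosh_pos x).ne').congr_deriv ?_
  rw [← sq, ← sq, Real.cosh_sq, add_sub_cancel_left, one_div]

theorem continuous_tanh : Continuous Real.tanh :=
  continuous_iff_continuousAt.2 fun x => (hasDerivAt_tanh x).continuousAt

theorem strictConcaveOn_tanh : StrictConcaveOn ℝ (Set.Ici 0) Real.tanh := by
  refine StrictAntiOn.strictConcaveOn_of_deriv (convex_Ici 0) continuous_tanh.continuousOn ?_
  intro x hx y hy hxy
  rw [interior_Ici, Set.mem_Ioi] at hx hy
  rw [(hasDerivAt_tanh x).deriv, (hasDerivAt_tanh y).deriv]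
  have hcosh : Real.cosh x < Real.cosh y := by
    rwa [Real.cosh_lt_cosh, abs_of_pos hx, abs_of_pos hy]
  have := Real.cosh_pos x
  gcongr

theorem mul_tanh_lt_tanh_mul {r y : ℝ} (hr₀ : 0 < r) (hr₁ : r < 1) (hy : 0 < y) :
    r * Real.tanh y < Real.tanh (r * y) := by
  have h := strictConcaveOn_tanh.2 (Set.mem_Ici.2 hy.le) Set.self_mem_Ici hy.ne' hr₀
    (sub_pos.2 hr₁) (add_sub_cancel r 1)
  simpa only [smul_eq_mul, Real.tanh_zero, mul_zero, add_zero] using h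

theorem lt_tanh_mul_of_lt {b p x : ℝ} (hb : 0 < b) (hfix : p = Real.tanh (b * p))
    (hx : 0 < x) (hxp : x < p) : x < Real.tanh (b * x) := by
  have hp : 0 < p := hx.trans hxp
  have h := mul_tanh_lt_tanh_mul (div_pos hx hp) ((div_lt_one hp).2 hxp) (mul_pos hb hp)
  rwa [← hfix, mul_left_comm, div_mul_cancel₀ x hp.ne'] at h

theorem tanh_mul_lt_of_lt {b p x : ℝ} (hb : 0 < b) (hfix : p = Real.tanh (b * p))
    (hp : 0 < p) (hpx : p < x) : Real.tanh (b * x) < x := by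
  have hx : 0 < x := hp.trans hpx
  have h := mul_tanh_lt_tanh_mul (div_pos hp hx) ((div_lt_one hx).2 hpx) (mul_pos hb hx)
  rw [mul_left_comm, div_mul_cancel₀ p hx.ne', ← hfix, div_mul_eq_mul_div, div_lt_iff₀ hx] at h
  exact lt_of_mul_lt_mul_left h hp.le

theorem exists_pos_lt_tanh_mul {b : ℝ} (hb : 1 < b) : ∃ t > 0, t < Real.tanh (b * t) := by
  have hderiv : HasDerivAt (fun x => Real.tanh (b * x)) b 0 := by
    refine ((hasDerivAt_tanh (b * 0)).comp 0 (hasDerivAt_const_mul b)).congr_deriv ?_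
    simp
  have hslope : ∀ᶠ t in 𝓝[>] (0 : ℝ), 1 < t⁻¹ * Real.tanh (b * t) := by
    simpa using hderiv.tendsto_slope_zero_right.eventually_const_lt hb
  obtain ⟨t, ht, ht₀⟩ := (hslope.and self_mem_nhdsWithin).exists
  exact ⟨t, ht₀, by rwa [lt_inv_mul_iff₀ ht₀, mul_one] at ht⟩

theorem exists_pos_eq_tanh_mul {b : ℝ} (hb : 1 < b) : ∃ z > 0, z = Real.tanh (b * z) := by
  obtain ⟨t, ht₀, ht⟩ := exists_pos_lt_tanh_mul hb
  have hcont : Continuous fun x => Real.tanh (b * x) - x :=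
    (continuous_tanh.comp (continuous_const_mul b)).sub continuous_id
  obtain ⟨z, hz, hroot⟩ := intermediate_value_Icc' (by linarith : t ≤ t + 1) hcont.continuousOn
    ⟨by linarith [Real.tanh_lt_one (b * (t + 1))], (sub_pos.2 ht).le⟩
  exact ⟨z, ht₀.trans_le hz.1, (sub_eq_zero.1 hroot).symm⟩

/-- The mean-field factor per spin: the `n`-th power of `meanFieldFactor b v` is the partition
function of `n` spins whose Curie–Weiss energy `b n m² / 2` is replaced by its tangent line
`b n (v m - v² / 2)` at `m = v`. -/
def meanFieldFactor (b v : ℝ) : ℝ := Real.exp (-(b * v ^ 2 / 2)) * (2 * Real.cosh (b * v))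

theorem meanFieldFactor_pos (b v : ℝ) : 0 < meanFieldFactor b v :=
  mul_pos (Real.exp_pos _) (mul_pos two_pos (Real.cosh_pos _))

theorem meanFieldFactor_abs (b v : ℝ) : meanFieldFactor b |v| = meanFieldFactor b v := by
  rcases abs_choice v with h | h <;> simp [h, meanFieldFactor]

theorem hasDerivAt_meanFieldFactor (b v : ℝ) :
    HasDerivAt (meanFieldFactor b) (b * meanFieldFactor b v * (Real.tanh (b * v) - v)) v := by
  have hlin : HasDerivAt (fun y => b * y) b v := hasDerivAt_const_mul b
  have hquad : HasDerivAt (fun y => -(b * y ^ 2 / 2)) (-(b * v)) v :=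
    ((((hasDerivAt_pow 2 v).const_mul b).div_const 2).neg).congr_deriv (by norm_num; ring)
  refine (hquad.exp.mul (hlin.cosh.const_mul 2)).congr_deriv ?_
  have := (Real.cosh_pos (b * v)).ne'
  rw [meanFieldFactor, Real.tanh_eq_sinh_div_cosh]
  field_simp
  ring

theorem continuous_meanFieldFactor (b : ℝ) : Continuous (meanFieldFactor b) :=
  continuous_iff_continuousAt.2 fun v => (hasDerivAt_meanFieldFactor b v).continuousAt

theorem strictMonoOn_meanFieldFactor {b p : ℝ} (hb : 0 < b) (hfix : p = Real.tanh (b * p)) :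
    StrictMonoOn (meanFieldFactor b) (Set.Icc 0 p) := by
  refine strictMonoOn_of_deriv_pos (convex_Icc 0 p)
    (continuous_meanFieldFactor b).continuousOn fun x hx => ?_
  rw [interior_Icc] at hx
  rw [(hasDerivAt_meanFieldFactor b x).deriv]
  exact mul_pos (mul_pos hb (meanFieldFactor_pos b x))
    (sub_pos.2 (lt_tanh_mul_of_lt hb hfix hx.1 hx.2))

theorem strictAntiOn_meanFieldFactor {b p : ℝ} (hb : 0 < b) (hp : 0 < p)
    (hfix : p = Real.tanh (b * p)) :
    StrictAntiOn (meanFieldFactor b) (Set.Ici p) := by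
  refine strictAntiOn_of_deriv_neg (convex_Ici p)
    (continuous_meanFieldFactor b).continuousOn fun x hx => ?_
  rw [interior_Ici] at hx
  rw [(hasDerivAt_meanFieldFactor b x).deriv]
  exact mul_neg_of_pos_of_neg (mul_pos hb (meanFieldFactor_pos b x))
    (sub_neg.2 (tanh_mul_lt_of_lt hb hfix hp hx))

theorem exists_meanFieldFactor_gap {b p δ : ℝ} (hb : 0 < b) (hp : 0 < p)
    (hfix : p = Real.tanh (b * p)) (hδ : 0 < δ) (hδp : δ < p) :
    ∃ c, 0 ≤ c ∧ c < 1 ∧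
      ∀ v, δ ≤ |(|v| - p)| → meanFieldFactor b v ≤ c * meanFieldFactor b p := by
  have hmono := strictMonoOn_meanFieldFactor hb hfix
  have hanti := strictAntiOn_meanFieldFactor hb hp hfix
  have hpos := meanFieldFactor_pos b p
  refine ⟨max (meanFieldFactor b (p - δ)) (meanFieldFactor b (p + δ)) / meanFieldFactor b p,
    div_nonneg (le_max_of_le_left (meanFieldFactor_pos b _).le) hpos.le, ?_, fun v hv => ?_⟩
  · rw [div_lt_one hpos, max_lt_iff]
    exact ⟨hmono ⟨by linarith, by linarith⟩ ⟨hp.le, le_rfl⟩ (by linarith),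
      hanti Set.self_mem_Ici (Set.mem_Ici.2 (by linarith)) (by linarith)⟩
  · rw [div_mul_cancel₀ _ hpos.ne', ← meanFieldFactor_abs]
    rcases le_abs.1 hv with hfar | hnear
    · exact le_max_of_le_right
        (hanti.antitoneOn (Set.mem_Ici.2 (by linarith)) (Set.mem_Ici.2 (by linarith)) (by linarith))
    · exact le_max_of_le_left
        (hmono.monotoneOn ⟨abs_nonneg v, by linarith⟩ ⟨by linarith, by linarith⟩ (by linarith))

end MeanField

section Block

variable {ι : Type*}

theorem spinVal_not (s : Bool) : spinVal (!s) = -spinVal s := by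
  cases s <;> simp [spinVal]

theorem abs_spinVal (s : Bool) : |spinVal s| = 1 := by
  cases s <;> simp [spinVal]

theorem abs_spinVal_sub_le_two (s t : Bool) : |spinVal s - spinVal t| ≤ 2 := by
  cases s <;> cases t <;> norm_num [spinVal]

variable [Fintype ι]

/-- The magnetization per spin of one block, taken to be `0` on an empty block. -/
def magnetization (σ : ι → Bool) : ℝ := (∑ i, spinVal (σ i)) / Fintype.card ι

/-- The overlap `∑ᵢ σᵢ τᵢ` of two blocks, through which the perfect matching enters the
Hamiltonian. -/
def overlap (σ τ : ι → Bool) : ℝ := ∑ i, spinVal (σ i) * spinVal (τ i)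

theorem card_mul_magnetization (σ : ι → Bool) :
    Fintype.card ι * magnetization σ = ∑ i, spinVal (σ i) := by
  cases isEmpty_or_nonempty ι
  · simp
  · exact mul_div_cancel₀ _ (Nat.cast_ne_zero.2 Fintype.card_ne_zero)

theorem magnetization_compl (σ : ι → Bool) : magnetization σᶜ = -magnetization σ := by
  simp [magnetization, spinVal_not, neg_div]

theorem magnetization_comp_perm (σ : ι → Bool) (e : Equiv.Perm ι) :
    magnetization (σ ∘ e) = magnetization σ := by
  simp only [magnetization, Function.comp_apply, Equiv.sum_comp e fun i => spinVal (σ i)]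

theorem card_image_magnetization_le [DecidableEq ι] :
    (Finset.univ.image (magnetization : (ι → Bool) → ℝ)).card ≤ Fintype.card ι + 1 := by
  have hsub : Finset.univ.image (magnetization : (ι → Bool) → ℝ) ⊆
      (Finset.range (Fintype.card ι + 1)).image
        fun k : ℕ => (2 * (k : ℝ) - Fintype.card ι) / Fintype.card ι := by
    intro v hv
    obtain ⟨σ, -, rfl⟩ := Finset.mem_image.1 hv
    refine Finset.mem_image.2 ⟨(Finset.univ.filter fun i => σ i = true).card,
      Finset.mem_range.2 (Nat.lt_succ_of_le (Finset.card_le_univ _)), ?_⟩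
    have hspin (i : ι) : spinVal (σ i) = 2 * (if σ i = true then 1 else 0) - 1 := by
      cases σ i <;> norm_num [spinVal]
    simp only [magnetization, hspin, Finset.sum_sub_distrib, ← Finset.mul_sum, Finset.sum_boole,
      Finset.sum_const, Finset.card_univ, nsmul_eq_mul, mul_one]
  exact (Finset.card_le_card hsub).trans (Finset.card_image_le.trans_eq (Finset.card_range _))

theorem overlap_comm (σ τ : ι → Bool) : overlap σ τ = overlap τ σ := by
  simp only [overlap, mul_comm]

theorem overlap_compl_right (σ τ : ι → Bool) : overlap σ τᶜ = -overlap σ τ := by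
  simp [overlap, spinVal_not]

theorem overlap_compl_compl (σ τ : ι → Bool) : overlap σᶜ τᶜ = overlap σ τ := by
  rw [overlap_compl_right, overlap_comm, overlap_compl_right, neg_neg, overlap_comm]

theorem abs_overlap_le (σ τ : ι → Bool) : |overlap σ τ| ≤ Fintype.card ι := by
  refine (Finset.abs_sum_le_sum_abs _ _).trans_eq ?_
  simp [abs_mul, abs_spinVal]

theorem sum_sum_spinVal_mul_sub (σ τ : ι → Bool) :
    ∑ i, ∑ j, spinVal (σ i) * (spinVal (τ j) - spinVal (τ i)) =
      Fintype.card ι * (Fintype.card ι * (magnetization σ * magnetization τ) - overlap σ τ) := by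
  have hprod : ∑ i, ∑ j, spinVal (σ i) * spinVal (τ j) =
      (Fintype.card ι * magnetization σ) * (Fintype.card ι * magnetization τ) := by
    rw [← Fintype.sum_mul_sum, card_mul_magnetization, card_mul_magnetization]
  have hdiag : ∑ i, ∑ _j : ι, spinVal (σ i) * spinVal (τ i) = Fintype.card ι * overlap σ τ := by
    simp only [Finset.sum_const, Finset.card_univ, nsmul_eq_mul, ← Finset.mul_sum, overlap]
  simp only [mul_sub, Finset.sum_sub_distrib, hprod, hdiag]
  ring

theorem overlap_comp_swap_sub [DecidableEq ι] (σ τ : ι → Bool) (i j : ι) :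
    overlap σ (τ ∘ Equiv.swap i j) - overlap σ τ =
      (spinVal (σ i) - spinVal (σ j)) * (spinVal (τ j) - spinVal (τ i)) := by
  obtain rfl | hij := eq_or_ne i j
  · simp
  have hfixed : ∀ k ∈ Finset.univ, k ∉ ({i, j} : Finset ι) →
      spinVal (σ k) * spinVal (τ (Equiv.swap i j k)) - spinVal (σ k) * spinVal (τ k) = 0 := by
    intro k _ hk
    rw [Finset.mem_insert, Finset.mem_singleton, not_or] at hk
    rw [Equiv.swap_apply_of_ne_of_ne hk.1 hk.2, sub_self]
  simp only [overlap, Function.comp_apply, ← Finset.sum_sub_distrib]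
  rw [← Finset.sum_subset (Finset.subset_univ {i, j}) hfixed, Finset.sum_pair hij,
    Equiv.swap_apply_left, Equiv.swap_apply_right]
  ring

theorem abs_overlap_comp_swap_sub_le [DecidableEq ι] (σ τ : ι → Bool) (i j : ι) :
    |overlap σ (τ ∘ Equiv.swap i j) - overlap σ τ| ≤ 4 := by
  rw [overlap_comp_swap_sub, abs_mul]
  exact (mul_le_mul (abs_spinVal_sub_le_two _ _) (abs_spinVal_sub_le_two _ _) (abs_nonneg _)
    zero_le_two).trans_eq (by norm_num)

end Block

section CurieWeiss

variable {ι : Type*} [Fintype ι]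

/-- The Boltzmann weight `exp (b n m² / 2)` of a block of `n` spins in the Curie–Weiss model at
inverse temperature `b`; the blocks of `twoH n α β` have `b = β / 2`. -/
def curieWeissWeight (b : ℝ) (σ : ι → Bool) : ℝ :=
  Real.exp (b * Fintype.card ι * magnetization σ ^ 2 / 2)

theorem curieWeissWeight_pos (b : ℝ) (σ : ι → Bool) : 0 < curieWeissWeight b σ :=
  Real.exp_pos _

theorem curieWeissWeight_compl (b : ℝ) (σ : ι → Bool) :
    curieWeissWeight b σᶜ = curieWeissWeight b σ := by
  simp only [curieWeissWeight, magnetization_compl, neg_sq]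

theorem curieWeissWeight_comp_perm (b : ℝ) (σ : ι → Bool) (e : Equiv.Perm ι) :
    curieWeissWeight b (σ ∘ e) = curieWeissWeight b σ := by
  simp only [curieWeissWeight, magnetization_comp_perm]

variable [DecidableEq ι]

theorem sum_exp_mul_sum_spinVal (t : ℝ) :
    ∑ σ : ι → Bool, Real.exp (t * ∑ i, spinVal (σ i)) =
      (2 * Real.cosh t) ^ Fintype.card ι := by
  have hfactor := Finset.prod_univ_sum (fun _ : ι => (Finset.univ : Finset Bool))
    fun _ s => Real.exp (t * spinVal s)
  simp only [Fintype.piFinset_univ, ← Real.exp_sum, ← Finset.mul_sum, Fintype.sum_bool,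
    Finset.prod_const, Finset.card_univ] at hfactor
  rw [← hfactor, Real.cosh_eq]
  congr 1
  simp only [spinVal, if_true, Bool.false_eq_true, if_false]
  ring_nf

theorem sum_exp_tangent (b v : ℝ) :
    ∑ σ : ι → Bool, Real.exp (b * Fintype.card ι * (v * magnetization σ - v ^ 2 / 2)) =
      meanFieldFactor b v ^ Fintype.card ι := by
  rw [meanFieldFactor, mul_pow, ← sum_exp_mul_sum_spinVal, Finset.mul_sum, ← Real.exp_nat_mul]
  refine Finset.sum_congr rfl fun σ _ => ?_
  rw [← Real.exp_add, ← card_mul_magnetization]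
  ring_nf

theorem meanFieldFactor_pow_le_sum {b : ℝ} (hb : 0 ≤ b) (v : ℝ) :
    meanFieldFactor b v ^ Fintype.card ι ≤ ∑ σ : ι → Bool, curieWeissWeight b σ := by
  rw [← sum_exp_tangent]
  refine Finset.sum_le_sum fun σ _ => Real.exp_le_exp.2 ?_
  rw [mul_div_assoc]
  gcongr
  linarith [sq_nonneg (magnetization σ - v)]

theorem sum_curieWeissWeight_fiber_le (b v : ℝ) :
    ∑ σ : ι → Bool with magnetization σ = v, curieWeissWeight b σ ≤
      meanFieldFactor b v ^ Fintype.card ι := by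
  rw [← sum_exp_tangent]
  refine le_trans (Finset.sum_le_sum fun σ hσ => ?_) (Finset.sum_le_sum_of_subset_of_nonneg
    (Finset.filter_subset _ _) fun _ _ _ => (Real.exp_pos _).le)
  rw [← (Finset.mem_filter.1 hσ).2, curieWeissWeight]
  exact Real.exp_le_exp.2 (le_of_eq (by ring))

theorem sum_curieWeissWeight_filter_le {b c p : ℝ} (hb : 0 ≤ b) (hc : 0 ≤ c)
    (P : ℝ → Prop) [DecidablePred P]
    (hP : ∀ v, P v → meanFieldFactor b v ≤ c * meanFieldFactor b p) :
    ∑ σ : ι → Bool with P (magnetization σ), curieWeissWeight b σ ≤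
      (Fintype.card ι + 1) * c ^ Fintype.card ι * ∑ σ : ι → Bool, curieWeissWeight b σ := by
  set n := Fintype.card ι
  set V := (Finset.univ.image (magnetization : (ι → Bool) → ℝ)).filter P
  have hmaps : ∀ σ ∈ Finset.univ.filter fun σ : ι → Bool => P (magnetization σ),
      magnetization σ ∈ V := fun σ hσ =>
    Finset.mem_filter.2 ⟨Finset.mem_image_of_mem _ (Finset.mem_univ σ), (Finset.mem_filter.1 hσ).2⟩
  have hfiber : ∀ v ∈ V, ∑ σ ∈ (Finset.univ.filter fun σ : ι → Bool => P (magnetization σ)) with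
      magnetization σ = v, curieWeissWeight b σ ≤ (c * meanFieldFactor b p) ^ n := fun v hv =>
    calc _ ≤ ∑ σ : ι → Bool with magnetization σ = v, curieWeissWeight b σ :=
          Finset.sum_le_sum_of_subset_of_nonneg
            (Finset.filter_subset_filter _ (Finset.filter_subset _ _))
            fun σ _ _ => (curieWeissWeight_pos b σ).le
      _ ≤ meanFieldFactor b v ^ n := sum_curieWeissWeight_fiber_le b v
      _ ≤ _ := pow_le_pow_left₀ (meanFieldFactor_pos b v).le (hP v (Finset.mem_filter.1 hv).2) n
  have hcard : (V.card : ℝ) ≤ n + 1 := by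
    exact_mod_cast (Finset.card_filter_le _ _).trans card_image_magnetization_le
  have hpow : 0 ≤ (c * meanFieldFactor b p) ^ n :=
    pow_nonneg (mul_nonneg hc (meanFieldFactor_pos b p).le) n
  calc _ = ∑ v ∈ V, ∑ σ ∈ (Finset.univ.filter fun σ : ι → Bool => P (magnetization σ)) with
          magnetization σ = v, curieWeissWeight b σ :=
        (Finset.sum_fiberwise_of_maps_to hmaps _).symm
    _ ≤ V.card • (c * meanFieldFactor b p) ^ n := Finset.sum_le_card_nsmul _ _ _ hfiber
    _ ≤ (n + 1) * (c * meanFieldFactor b p) ^ n := by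
        rw [nsmul_eq_mul]
        exact mul_le_mul_of_nonneg_right hcard hpow
    _ = (n + 1) * c ^ n * meanFieldFactor b p ^ n := by rw [mul_pow, mul_assoc]
    _ ≤ _ := mul_le_mul_of_nonneg_left (meanFieldFactor_pow_le_sum hb p) (by positivity)

end CurieWeiss

section Exchange

theorem abs_exp_sub_one_le_exp_abs_sub_one (x : ℝ) : |Real.exp x - 1| ≤ Real.exp |x| - 1 := by
  rcases le_total 0 x with hx | hx
  · rw [abs_of_nonneg hx, abs_of_nonneg (sub_nonneg.2 (Real.one_le_exp hx))]
  · rw [abs_of_nonpos hx, abs_of_nonpos (sub_nonpos.2 (Real.exp_le_one_iff.2 hx))]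
    linarith [Real.one_le_cosh x, Real.cosh_eq x]

theorem abs_exp_mul_sub_exp_mul_le {t x y C : ℝ} (h : |y - x| ≤ C) :
    |Real.exp (t * y) - Real.exp (t * x)| ≤ (Real.exp (C * |t|) - 1) * Real.exp (t * x) :=
  calc |Real.exp (t * y) - Real.exp (t * x)|
      = |Real.exp (t * (y - x)) - 1| * Real.exp (t * x) := by
        rw [← abs_of_pos (Real.exp_pos (t * x)), ← abs_mul, abs_of_pos (Real.exp_pos _), sub_mul,
          ← Real.exp_add, one_mul]
        ring_nf
    _ ≤ (Real.exp |t * (y - x)| - 1) * Real.exp (t * x) := by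
        gcongr
        exact abs_exp_sub_one_le_exp_abs_sub_one _
    _ ≤ (Real.exp (C * |t|) - 1) * Real.exp (t * x) := by
        rw [abs_mul, mul_comm C]
        gcongr

variable {ι : Type*} [Fintype ι] [DecidableEq ι]

-- Substituting `τ ↦ τ ∘ swap i j` trades `τ j` for `τ i` at the price of moving the overlap by
-- at most `4`.
theorem abs_sum_spinVal_sub_le (t : ℝ) (σ : ι → Bool) {w : (ι → Bool) → ℝ} (hw₀ : ∀ τ, 0 ≤ w τ)
    (hw : ∀ (e : Equiv.Perm ι) τ, w (τ ∘ e) = w τ) (i j : ι) :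
    |∑ τ, w τ * (spinVal (σ i) * (spinVal (τ j) - spinVal (τ i))) * Real.exp (t * overlap σ τ)| ≤
      (Real.exp (4 * |t|) - 1) * ∑ τ, w τ * Real.exp (t * overlap σ τ) := by
  have hswap : ∑ τ, w τ * (spinVal (σ i) * spinVal (τ j)) * Real.exp (t * overlap σ τ) =
      ∑ τ, w τ * (spinVal (σ i) * spinVal (τ i)) *
        Real.exp (t * overlap σ (τ ∘ Equiv.swap i j)) := by
    rw [← Equiv.sum_comp ((Equiv.swap i j).arrowCongr (Equiv.refl Bool))]
    refine Finset.sum_congr rfl fun τ _ => ?_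
    have happly : (Equiv.swap i j).arrowCongr (Equiv.refl Bool) τ = τ ∘ Equiv.swap i j := rfl
    rw [happly, hw, Function.comp_apply, Equiv.swap_apply_right]
  have hdiff : ∑ τ, w τ * (spinVal (σ i) * (spinVal (τ j) - spinVal (τ i))) *
      Real.exp (t * overlap σ τ) = ∑ τ, w τ * (spinVal (σ i) * spinVal (τ i)) *
        (Real.exp (t * overlap σ (τ ∘ Equiv.swap i j)) - Real.exp (t * overlap σ τ)) := by
    simp only [mul_sub, sub_mul, Finset.sum_sub_distrib, hswap]
  rw [hdiff, Finset.mul_sum]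
  refine (Finset.abs_sum_le_sum_abs _ _).trans (Finset.sum_le_sum fun τ _ => ?_)
  rw [abs_mul, abs_mul, abs_mul, abs_spinVal, abs_spinVal, abs_of_nonneg (hw₀ τ)]
  have hexp := abs_exp_mul_sub_exp_mul_le (t := t) (abs_overlap_comp_swap_sub_le σ τ i j)
  linarith [mul_le_mul_of_nonneg_left hexp (hw₀ τ)]

theorem abs_sum_magnetization_sub_overlap_le (t : ℝ) (σ : ι → Bool) {w : (ι → Bool) → ℝ}
    (hw₀ : ∀ τ, 0 ≤ w τ) (hw : ∀ (e : Equiv.Perm ι) τ, w (τ ∘ e) = w τ) :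
    |∑ τ, w τ * (Fintype.card ι * (magnetization σ * magnetization τ) - overlap σ τ) *
        Real.exp (t * overlap σ τ)| ≤
      Fintype.card ι * (Real.exp (4 * |t|) - 1) * ∑ τ, w τ * Real.exp (t * overlap σ τ) := by
  cases isEmpty_or_nonempty ι
  · simp [overlap]
  set n : ℝ := (Fintype.card ι : ℝ) with hn
  set S := ∑ τ, w τ * Real.exp (t * overlap σ τ)
  have hn₀ : 0 < n := Nat.cast_pos.2 Fintype.card_pos
  have hterm (τ : ι → Bool) : ∑ i, ∑ j, w τ * (spinVal (σ i) * (spinVal (τ j) - spinVal (τ i))) *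
      Real.exp (t * overlap σ τ) =
        n * (w τ * (n * (magnetization σ * magnetization τ) - overlap σ τ) *
          Real.exp (t * overlap σ τ)) := by
    simp only [← Finset.sum_mul]
    simp only [← Finset.mul_sum (a := w τ), sum_sum_spinVal_mul_sub]
    ring
  refine le_of_mul_le_mul_left ?_ hn₀
  calc _ = |∑ i, ∑ j, ∑ τ, w τ * (spinVal (σ i) * (spinVal (τ j) - spinVal (τ i))) *
          Real.exp (t * overlap σ τ)| := by
        rw [← abs_of_pos hn₀, ← abs_mul, abs_of_pos hn₀, Finset.mul_sum]
        simp only [Finset.sum_comm (t := (Finset.univ : Finset (ι → Bool))), hterm]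
    _ ≤ ∑ _i : ι, ∑ _j : ι, (Real.exp (4 * |t|) - 1) * S :=
        (Finset.abs_sum_le_sum_abs _ _).trans <| Finset.sum_le_sum fun i _ =>
          (Finset.abs_sum_le_sum_abs _ _).trans <| Finset.sum_le_sum fun j _ =>
            abs_sum_spinVal_sub_le t σ hw₀ hw i j
    _ = n * (n * (Real.exp (4 * |t|) - 1) * S) := by
        simp only [Finset.sum_const, Finset.card_univ, nsmul_eq_mul, ← hn]
        ring

theorem sum_overlap_le_of_magnetization_mul_le (t d : ℝ) (σ : ι → Bool) {w : (ι → Bool) → ℝ}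
    (hw₀ : ∀ τ, 0 ≤ w τ) (hw : ∀ (e : Equiv.Perm ι) τ, w (τ ∘ e) = w τ)
    (hd : ∀ τ, w τ ≠ 0 → magnetization σ * magnetization τ ≤ -d) :
    ∑ τ, w τ * overlap σ τ * Real.exp (t * overlap σ τ) ≤
      Fintype.card ι * (Real.exp (4 * |t|) - 1 - d) * ∑ τ, w τ * Real.exp (t * overlap σ τ) := by
  have hexch := neg_le_of_abs_le (abs_sum_magnetization_sub_overlap_le t σ hw₀ hw)
  have hmag : ∑ τ, w τ * (Fintype.card ι * (magnetization σ * magnetization τ)) *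
      Real.exp (t * overlap σ τ) ≤
      Fintype.card ι * -d * ∑ τ, w τ * Real.exp (t * overlap σ τ) := by
    rw [Finset.mul_sum]
    refine Finset.sum_le_sum fun τ _ => ?_
    obtain hτ | hτ := eq_or_ne (w τ) 0
    · simp [hτ]
    · have hscale : 0 ≤ Fintype.card ι * (w τ * Real.exp (t * overlap σ τ)) :=
        mul_nonneg (Nat.cast_nonneg _) (mul_nonneg (hw₀ τ) (Real.exp_pos _).le)
      linarith [mul_le_mul_of_nonneg_left (hd τ hτ) hscale]
  simp only [mul_sub, sub_mul, Finset.sum_sub_distrib] at hexch hmag ⊢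
  linarith

theorem mul_sum_exp_overlap_le_sum_exp_neg_overlap {a d : ℝ} (ha : 0 ≤ a) (σ : ι → Bool)
    {w : (ι → Bool) → ℝ} (hw₀ : ∀ τ, 0 ≤ w τ) (hw : ∀ (e : Equiv.Perm ι) τ, w (τ ∘ e) = w τ)
    (hd : ∀ τ, w τ ≠ 0 → magnetization σ * magnetization τ ≤ -d) :
    (1 + 2 * a * (Fintype.card ι * (d - (Real.exp (4 * a) - 1)))) *
        ∑ τ, w τ * Real.exp (a * overlap σ τ) ≤ ∑ τ, w τ * Real.exp (-(a * overlap σ τ)) := by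
  have hoverlap := sum_overlap_le_of_magnetization_mul_le a d σ hw₀ hw hd
  rw [abs_of_nonneg ha] at hoverlap
  calc _ ≤ ∑ τ, w τ * Real.exp (a * overlap σ τ) -
          2 * a * ∑ τ, w τ * overlap σ τ * Real.exp (a * overlap σ τ) := by
        linarith [mul_le_mul_of_nonneg_left hoverlap (by positivity : 0 ≤ 2 * a)]
    _ = ∑ τ, w τ * ((-(2 * a * overlap σ τ) + 1) * Real.exp (a * overlap σ τ)) := by
        rw [Finset.mul_sum, ← Finset.sum_sub_distrib]
        exact Finset.sum_congr rfl fun τ _ => by ring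
    _ ≤ ∑ τ, w τ * (Real.exp (-(2 * a * overlap σ τ)) * Real.exp (a * overlap σ τ)) := by
        gcongr with τ
        · exact hw₀ τ
        · exact Real.add_one_le_exp _
    _ = ∑ τ, w τ * Real.exp (-(a * overlap σ τ)) := by
        simp only [← Real.exp_add]
        ring_nf

end Exchange

section Gibbs

variable {ι : Type*} [Fintype ι]

/-- The Boltzmann weight of two Curie–Weiss blocks at inverse temperature `b` whose spins are
coupled pairwise with strength `a`; it is the weight of `twoH n a (2 * b)`. -/
def gibbsWeight (a b : ℝ) (x : (ι → Bool) × (ι → Bool)) : ℝ :=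
  curieWeissWeight b x.1 * curieWeissWeight b x.2 * Real.exp (a * overlap x.1 x.2)

theorem gibbsWeight_pos (a b : ℝ) (x : (ι → Bool) × (ι → Bool)) : 0 < gibbsWeight a b x :=
  mul_pos (mul_pos (curieWeissWeight_pos b _) (curieWeissWeight_pos b _)) (Real.exp_pos _)

theorem gibbsWeight_swap (a b : ℝ) (x : (ι → Bool) × (ι → Bool)) :
    gibbsWeight a b x.swap = gibbsWeight a b x := by
  simp only [gibbsWeight, Prod.fst_swap, Prod.snd_swap, overlap_comm x.2,
    mul_comm (curieWeissWeight b x.2)]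

theorem gibbsWeight_compl (a b : ℝ) (x : (ι → Bool) × (ι → Bool)) :
    gibbsWeight a b xᶜ = gibbsWeight a b x := by
  simp only [gibbsWeight, fst_compl, snd_compl, curieWeissWeight_compl,
    overlap_compl_compl]

theorem exp_mul_overlap_le (a : ℝ) (σ τ : ι → Bool) :
    Real.exp (a * overlap σ τ) ≤ Real.exp |a| ^ Fintype.card ι := by
  rw [← Real.exp_nat_mul, Real.exp_le_exp, mul_comm (Fintype.card ι : ℝ)]
  refine (le_abs_self _).trans ?_
  rw [abs_mul]
  exact mul_le_mul_of_nonneg_left (abs_overlap_le σ τ) (abs_nonneg a)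

theorem gibbsWeight_le (a b : ℝ) (x : (ι → Bool) × (ι → Bool)) :
    gibbsWeight a b x ≤
      Real.exp |a| ^ Fintype.card ι * (curieWeissWeight b x.1 * curieWeissWeight b x.2) := by
  rw [gibbsWeight, mul_comm]
  exact mul_le_mul_of_nonneg_right (exp_mul_overlap_le a _ _)
    (mul_pos (curieWeissWeight_pos b _) (curieWeissWeight_pos b _)).le

theorem curieWeissWeight_mul_le (a b : ℝ) (x : (ι → Bool) × (ι → Bool)) :
    curieWeissWeight b x.1 * curieWeissWeight b x.2 ≤
      Real.exp |a| ^ Fintype.card ι * gibbsWeight a b x := by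
  have hone : 1 ≤ Real.exp |a| ^ Fintype.card ι * Real.exp (a * overlap x.1 x.2) := by
    have h := exp_mul_overlap_le (-a) x.1 x.2
    rw [abs_neg, neg_mul, Real.exp_neg] at h
    exact (inv_le_iff_one_le_mul₀ (Real.exp_pos _)).1 h
  rw [gibbsWeight, mul_left_comm]
  exact le_mul_of_one_le_right
    (mul_pos (curieWeissWeight_pos b _) (curieWeissWeight_pos b _)).le hone

variable [DecidableEq ι]

theorem sum_gibbsWeight_filter_fst_le {b c p : ℝ} (a : ℝ) (hb : 0 ≤ b) (hc : 0 ≤ c)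
    (P : ℝ → Prop) [DecidablePred P]
    (hP : ∀ v, P v → meanFieldFactor b v ≤ c * meanFieldFactor b p) :
    ∑ x : (ι → Bool) × (ι → Bool) with P (magnetization x.1), gibbsWeight a b x ≤
      (Fintype.card ι + 1) * (c * Real.exp (2 * |a|)) ^ Fintype.card ι *
        ∑ x : (ι → Bool) × (ι → Bool), gibbsWeight a b x := by
  set n := Fintype.card ι
  set E := Real.exp |a| ^ n
  have hE2 : (c * Real.exp (2 * |a|)) ^ n = c ^ n * (E * E) := by
    rw [mul_pow, two_mul, Real.exp_add, mul_pow]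
  have : 0 ≤ ∑ τ : ι → Bool, curieWeissWeight b τ :=
    Finset.sum_nonneg fun τ _ => (curieWeissWeight_pos b τ).le
  calc _ ≤ ∑ x : (ι → Bool) × (ι → Bool) with P (magnetization x.1),
          E * (curieWeissWeight b x.1 * curieWeissWeight b x.2) :=
        Finset.sum_le_sum fun x _ => gibbsWeight_le a b x
    _ = E * ((∑ σ : ι → Bool with P (magnetization σ), curieWeissWeight b σ) *
          ∑ τ : ι → Bool, curieWeissWeight b τ) := by
        rw [Finset.sum_mul_sum, ← Finset.sum_product', ← Finset.mul_sum,
          ← Finset.filter_product_left, Finset.univ_product_univ]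
    _ ≤ E * (((n + 1) * c ^ n * ∑ σ : ι → Bool, curieWeissWeight b σ) *
          ∑ τ : ι → Bool, curieWeissWeight b τ) := by
        gcongr
        exact sum_curieWeissWeight_filter_le hb hc P hP
    _ = E * ((n + 1) * c ^ n) * ∑ x : (ι → Bool) × (ι → Bool),
          curieWeissWeight b x.1 * curieWeissWeight b x.2 := by
        rw [mul_assoc (_ * _), Fintype.sum_mul_sum, ← Fintype.sum_prod_type', ← mul_assoc]
    _ ≤ E * ((n + 1) * c ^ n) * ∑ x : (ι → Bool) × (ι → Bool), E * gibbsWeight a b x := by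
        gcongr E * ((n + 1) * c ^ n) * ∑ x, ?_ with x
        exact curieWeissWeight_mul_le a b x
    _ = _ := by
        rw [← Finset.mul_sum, hE2]
        ring

theorem sum_gibbsWeight_filter_mul_le_neg_le {a : ℝ} (ha : 0 ≤ a) (b d : ℝ) :
    (1 + 2 * a * (Fintype.card ι * (d - (Real.exp (4 * a) - 1)))) *
        ∑ x : (ι → Bool) × (ι → Bool) with magnetization x.1 * magnetization x.2 ≤ -d,
          gibbsWeight a b x ≤
      ∑ x : (ι → Bool) × (ι → Bool), gibbsWeight a b x := by
  rw [Finset.sum_filter, Fintype.sum_prod_type, Fintype.sum_prod_type, Finset.mul_sum]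
  refine Finset.sum_le_sum fun σ _ => ?_
  set w : (ι → Bool) → ℝ := fun τ =>
    if magnetization σ * magnetization τ ≤ -d then curieWeissWeight b τ else 0
  have hw₀ (τ) : 0 ≤ w τ := by
    simp only [w]
    split_ifs
    exacts [(curieWeissWeight_pos b τ).le, le_rfl]
  have hw_le (τ) : w τ ≤ curieWeissWeight b τ := by
    simp only [w]
    split_ifs
    exacts [le_rfl, (curieWeissWeight_pos b τ).le]
  have hw (e : Equiv.Perm ι) (τ) : w (τ ∘ e) = w τ := by
    simp only [w, magnetization_comp_perm, curieWeissWeight_comp_perm]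
  have hd (τ) (hτ : w τ ≠ 0) : magnetization σ * magnetization τ ≤ -d :=
    of_not_not fun h => hτ (if_neg h)
  have hopp := mul_sum_exp_overlap_le_sum_exp_neg_overlap ha σ hw₀ hw hd
  calc _ = curieWeissWeight b σ * ((1 + 2 * a * (Fintype.card ι * (d - (Real.exp (4 * a) - 1)))) *
          ∑ τ, w τ * Real.exp (a * overlap σ τ)) := by
        rw [mul_left_comm (curieWeissWeight b σ), Finset.mul_sum (a := curieWeissWeight b σ)]
        simp only [w, gibbsWeight, ite_mul, mul_ite, zero_mul, mul_zero, mul_assoc]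
    _ ≤ curieWeissWeight b σ * ∑ τ, curieWeissWeight b τ * Real.exp (-(a * overlap σ τ)) :=
        mul_le_mul_of_nonneg_left (hopp.trans (by gcongr; exact hw_le _))
          (curieWeissWeight_pos b σ).le
    _ = curieWeissWeight b σ * ∑ τ, curieWeissWeight b τ * Real.exp (a * overlap σ τ) := by
        rw [← compl_involutive.bijective.sum_comp]
        simp only [curieWeissWeight_compl, overlap_compl_right, mul_neg, neg_neg]
    _ = ∑ τ, gibbsWeight a b (σ, τ) := by
        simp only [Finset.mul_sum, gibbsWeight, mul_assoc]

end Gibbs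

section WeightedLaw

variable {X E : Type*} [Fintype X] [MeasurableSpace E]

/-- The law of the observable `φ` of a finite state space whose states have probabilities
proportional to `w`; negative weights count as `0`. -/
def weightedLaw (w : X → ℝ) (φ : X → E) : Measure E :=
  (∑ x, ENNReal.ofReal (w x))⁻¹ • ∑ x, ENNReal.ofReal (w x) • Measure.dirac (φ x)

theorem weightedLaw_apply (w : X → ℝ) (φ : X → E) {S : Set E} (hS : MeasurableSet S)
    [DecidablePred (· ∈ S)] :
    weightedLaw w φ S =
      (∑ x, ENNReal.ofReal (w x))⁻¹ * ∑ x with φ x ∈ S, ENNReal.ofReal (w x) := by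
  simp only [weightedLaw, Measure.smul_apply, Measure.finsetSum_apply, smul_eq_mul,
    Measure.dirac_apply' _ hS, Finset.sum_filter, Set.indicator_apply, Pi.one_apply, mul_ite,
    mul_one, mul_zero]

theorem measureReal_weightedLaw {w : X → ℝ} (hw : ∀ x, 0 ≤ w x) (φ : X → E) {S : Set E}
    (hS : MeasurableSet S) [DecidablePred (· ∈ S)] :
    (weightedLaw w φ).real S = (∑ x with φ x ∈ S, w x) / ∑ x, w x := by
  rw [measureReal_def, weightedLaw_apply w φ hS, ENNReal.toReal_mul, ENNReal.toReal_inv,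
    ← ENNReal.ofReal_sum_of_nonneg fun x _ => hw x, ← ENNReal.ofReal_sum_of_nonneg fun x _ => hw x,
    ENNReal.toReal_ofReal (Finset.sum_nonneg fun x _ => hw x),
    ENNReal.toReal_ofReal (Finset.sum_nonneg fun x _ => hw x), inv_mul_eq_div]

theorem isProbabilityMeasure_weightedLaw [Nonempty X] {w : X → ℝ} (hw : ∀ x, 0 < w x)
    (φ : X → E) : IsProbabilityMeasure (weightedLaw w φ) := by
  classical
  refine ⟨?_⟩
  rw [weightedLaw_apply w φ MeasurableSet.univ]
  simp only [Set.mem_univ, Finset.filter_true]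
  refine ENNReal.inv_mul_cancel ?_ (ENNReal.sum_ne_top.2 fun x _ => ENNReal.ofReal_ne_top)
  rw [← ENNReal.ofReal_sum_of_nonneg fun x _ => (hw x).le]
  exact (ENNReal.ofReal_pos.2 (Finset.sum_pos (fun x _ => hw x) Finset.univ_nonempty)).ne'

theorem measurePreserving_weightedLaw {w : X → ℝ} {φ : X → E} {g : E → E} (hg : Measurable g)
    (e : X ≃ X) (hw : ∀ x, w (e x) = w x) (hφ : ∀ x, φ (e x) = g (φ x)) :
    MeasurePreserving g (weightedLaw w φ) (weightedLaw w φ) := by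
  refine ⟨hg, ?_⟩
  rw [weightedLaw, Measure.map_smul, Measure.map_finset_sum hg.aemeasurable]
  simp only [Measure.map_smul, Measure.map_dirac' hg]
  rw [← Equiv.sum_comp e fun x => ENNReal.ofReal (w x) • Measure.dirac (φ x)]
  simp only [hw, hφ]

end WeightedLaw

section MagnetizationLaw

theorem mag1_eq_magnetization {n : ℕ} (x : TwoConf n) : mag1 n x = magnetization x.1 := by
  rw [mag1, magnetization, Fintype.card_fin, ← div_div, div_self two_ne_zero,
    one_div_mul_eq_div]

theorem mag2_eq_magnetization {n : ℕ} (x : TwoConf n) : mag2 n x = magnetization x.2 :=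
  mag1_eq_magnetization x.swap

theorem exp_neg_twoH {n : ℕ} (a β : ℝ) (x : TwoConf n) :
    Real.exp (-twoH n a β x) = gibbsWeight a (β / 2) x := by
  rw [twoH, gibbsWeight, curieWeissWeight, curieWeissWeight, ← Real.exp_add, ← Real.exp_add,
    ← Fintype.sum_mul_sum, ← Fintype.sum_mul_sum, ← card_mul_magnetization,
    ← card_mul_magnetization, overlap, Fintype.card_fin]
  congr 1
  rcases eq_or_ne (n : ℝ) 0 with hn | _
  · simp only [hn]
    ring
  · field_simp
    ring

theorem twoMagDist_eq_weightedLaw (n : ℕ) (a β : ℝ) :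
    twoMagDist n a β =
      weightedLaw (gibbsWeight a (β / 2)) fun x : TwoConf n =>
        (magnetization x.1, magnetization x.2) := by
  simp only [twoMagDist, weightedLaw, mag1_eq_magnetization, mag2_eq_magnetization, exp_neg_twoH]

theorem measureReal_twoMagDist (n : ℕ) (a β : ℝ) {P : ℝ × ℝ → Prop} [DecidablePred P]
    (hP : MeasurableSet {q | P q}) :
    (twoMagDist n a β).real {q | P q} =
      (∑ x : TwoConf n with P (magnetization x.1, magnetization x.2), gibbsWeight a (β / 2) x) /
        ∑ x : TwoConf n, gibbsWeight a (β / 2) x := by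
  rw [twoMagDist_eq_weightedLaw, measureReal_weightedLaw (fun x => (gibbsWeight_pos a _ x).le) _ hP]
  rfl

instance isProbabilityMeasure_twoMagDist (n : ℕ) (a β : ℝ) :
    IsProbabilityMeasure (twoMagDist n a β) := by
  rw [twoMagDist_eq_weightedLaw]
  exact isProbabilityMeasure_weightedLaw (gibbsWeight_pos a _) _

theorem measurePreserving_swap_twoMagDist (n : ℕ) (a β : ℝ) :
    MeasurePreserving Prod.swap (twoMagDist n a β) (twoMagDist n a β) := by
  rw [twoMagDist_eq_weightedLaw]
  exact measurePreserving_weightedLaw measurable_swap (Equiv.prodComm _ _)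
    (gibbsWeight_swap a _) fun _ => rfl

instance isNegInvariant_twoMagDist (n : ℕ) (a β : ℝ) : (twoMagDist n a β).IsNegInvariant := by
  refine ⟨?_⟩
  rw [twoMagDist_eq_weightedLaw]
  exact (measurePreserving_weightedLaw measurable_neg compl_involutive.toPerm
    (gibbsWeight_compl a _) fun x =>
      Prod.ext (magnetization_compl x.1) (magnetization_compl x.2)).map_eq

end MagnetizationLaw

section Limits

theorem tendsto_succ_mul_pow_zero {r : ℕ → ℝ} {ρ : ℝ} (hr₀ : ∀ n, 0 ≤ r n) (hρ : ρ < 1)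
    (hr : Tendsto r atTop (𝓝 ρ)) :
    Tendsto (fun n : ℕ => ((n : ℝ) + 1) * r n ^ n) atTop (𝓝 0) := by
  obtain ⟨c, hρc, hc⟩ := exists_between hρ
  have hc₀ : 0 ≤ c := (ge_of_tendsto' hr hr₀).trans hρc.le
  have hgeom : Tendsto (fun n : ℕ => ((n : ℝ) + 1) * c ^ n) atTop (𝓝 0) := by
    simpa only [add_mul, one_mul, add_zero] using
      (tendsto_self_mul_const_pow_of_lt_one hc₀ hc).add
        (tendsto_pow_atTop_nhds_zero_of_lt_one hc₀ hc)
  refine squeeze_zero' (Eventually.of_forall fun n => mul_nonneg (by positivity)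
    (pow_nonneg (hr₀ n) n)) ?_ hgeom
  filter_upwards [hr.eventually_lt_const hρc] with n hn
  exact mul_le_mul_of_nonneg_left (pow_le_pow_left₀ (hr₀ n) hn.le n) (by positivity)

variable {a : ℕ → ℝ} {β p δ d : ℝ}

theorem tendsto_measureReal_twoMagDist_fst (ha : Tendsto a atTop (𝓝 0)) (hβ : 0 < β)
    (hp : 0 < p) (hfix : p = Real.tanh (β / 2 * p)) (hδ : 0 < δ) (hδp : δ < p) :
    Tendsto (fun n => (twoMagDist n (a n) β).real {q | δ ≤ |(|q.1| - p)|}) atTop (𝓝 0) := by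
  obtain ⟨c, hc₀, hc₁, hgap⟩ := exists_meanFieldFactor_gap (half_pos hβ) hp hfix hδ hδp
  have hrate : Tendsto (fun n => c * Real.exp (2 * |a n|)) atTop (𝓝 c) := by
    simpa using (((ha.abs).const_mul 2).rexp).const_mul c
  refine squeeze_zero (fun n => measureReal_nonneg) (fun n => ?_)
    (tendsto_succ_mul_pow_zero (fun n => mul_nonneg hc₀ (Real.exp_pos _).le) hc₁ hrate)
  rw [measureReal_twoMagDist n _ _ (measurableSet_le measurable_const (by fun_prop)),
    div_le_iff₀ (Finset.sum_pos (fun x _ => gibbsWeight_pos _ _ x) Finset.univ_nonempty)]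
  simpa only [Fintype.card_fin] using
    sum_gibbsWeight_filter_fst_le (ι := Fin n) (a n) (half_pos hβ).le hc₀ _ hgap

theorem tendsto_measureReal_twoMagDist_snd (ha : Tendsto a atTop (𝓝 0)) (hβ : 0 < β)
    (hp : 0 < p) (hfix : p = Real.tanh (β / 2 * p)) (hδ : 0 < δ) (hδp : δ < p) :
    Tendsto (fun n => (twoMagDist n (a n) β).real {q | δ ≤ |(|q.2| - p)|}) atTop (𝓝 0) := by
  refine (tendsto_measureReal_twoMagDist_fst ha hβ hp hfix hδ hδp).congr fun n => ?_
  exact ((measurePreserving_swap_twoMagDist n (a n) β).measureReal_preimage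
    (measurableSet_le measurable_const (by fun_prop)).nullMeasurableSet).symm

theorem tendsto_exchange_factor (ha : Tendsto a atTop (𝓝 0))
    (hna : Tendsto (fun n : ℕ => (n : ℝ) * a n) atTop atTop) (hd : 0 < d) :
    Tendsto (fun n : ℕ => 1 + 2 * a n * (n * (d - (Real.exp (4 * a n) - 1)))) atTop atTop := by
  have hlim : Tendsto (fun n => 2 * (d - (Real.exp (4 * a n) - 1))) atTop (𝓝 (2 * d)) := by
    simpa using ((((ha.const_mul 4).rexp).sub_const 1).const_sub d).const_mul 2
  refine (tendsto_atTop_add_const_left _ 1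
    (hna.atTop_mul_pos (mul_pos two_pos hd) hlim)).congr fun n => ?_
  ring

theorem tendsto_measureReal_twoMagDist_mul_le_neg (β : ℝ) (ha : Tendsto a atTop (𝓝 0))
    (hna : Tendsto (fun n : ℕ => (n : ℝ) * a n) atTop atTop) (hd : 0 < d) :
    Tendsto (fun n => (twoMagDist n (a n) β).real {q | q.1 * q.2 ≤ -d}) atTop (𝓝 0) := by
  have hK := tendsto_exchange_factor ha hna hd
  refine squeeze_zero' (Eventually.of_forall fun n => measureReal_nonneg) ?_
    (tendsto_inv_atTop_zero.comp hK)
  filter_upwards [hK.eventually_gt_atTop 0, hna.eventually_gt_atTop 0] with n hKn hnan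
  have han : 0 ≤ a n := (pos_of_mul_pos_right hnan n.cast_nonneg).le
  have hle := sum_gibbsWeight_filter_mul_le_neg_le (ι := Fin n) han (β / 2) d
  rw [Fintype.card_fin] at hle
  rw [measureReal_twoMagDist n _ _ (measurableSet_le (by fun_prop) measurable_const),
    div_le_iff₀ (Finset.sum_pos (fun x _ => gibbsWeight_pos _ _ x) Finset.univ_nonempty),
    Function.comp_apply]
  exact (le_inv_mul_iff₀ hKn).2 hle

theorem exists_compl_union_neg_subset (hp : 0 < p) {U : Set (ℝ × ℝ)} (hU : U ∈ 𝓝 (p, p)) :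
    ∃ δ, 0 < δ ∧ δ < p ∧ (U ∪ -U)ᶜ ⊆
      {q | δ ≤ |(|q.1| - p)|} ∪ {q | δ ≤ |(|q.2| - p)|} ∪ {q | q.1 * q.2 ≤ -(p - δ) ^ 2} := by
  obtain ⟨r, hr, hball⟩ := Metric.mem_nhds_iff.1 hU
  have hmem {u v : ℝ} (hu : |u - p| < r) (hv : |v - p| < r) : (u, v) ∈ U :=
    hball (by rw [Metric.mem_ball, Prod.dist_eq]; exact max_lt hu hv)
  have hδr : min r (p / 2) ≤ r := min_le_left _ _
  have hδp : min r (p / 2) < p := (min_le_right _ _).trans_lt (half_lt_self hp)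
  refine ⟨min r (p / 2), lt_min hr (half_pos hp), hδp, fun q hq => ?_⟩
  generalize min r (p / 2) = δ at hδr hδp
  contrapose! hq
  simp only [Set.mem_union, Set.mem_ofPred_eq, not_or, not_le] at hq
  obtain ⟨⟨hfst, hsnd⟩, hmul⟩ := hq
  rw [Set.notMem_compl_iff]
  rcases le_total 0 q.1 with h₁ | h₁ <;> rcases le_total 0 q.2 with h₂ | h₂
  · rw [abs_of_nonneg h₁] at hfst
    rw [abs_of_nonneg h₂] at hsnd
    exact Or.inl (hmem (hfst.trans_le hδr) (hsnd.trans_le hδr))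
  · rw [abs_of_nonneg h₁, abs_lt] at hfst
    rw [abs_of_nonpos h₂, abs_lt] at hsnd
    nlinarith
  · rw [abs_of_nonpos h₁, abs_lt] at hfst
    rw [abs_of_nonneg h₂, abs_lt] at hsnd
    nlinarith
  · rw [abs_of_nonpos h₁] at hfst
    rw [abs_of_nonpos h₂] at hsnd
    exact Or.inr (hmem (hfst.trans_le hδr) (hsnd.trans_le hδr))

theorem tendsto_measureReal_twoMagDist_compl_union_neg (ha : Tendsto a atTop (𝓝 0))
    (hna : Tendsto (fun n : ℕ => (n : ℝ) * a n) atTop atTop) (hβ : 0 < β) (hp : 0 < p)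
    (hfix : p = Real.tanh (β / 2 * p)) {U : Set (ℝ × ℝ)} (hU : U ∈ 𝓝 (p, p)) :
    Tendsto (fun n => (twoMagDist n (a n) β).real (U ∪ -U)ᶜ) atTop (𝓝 0) := by
  obtain ⟨δ, hδ, hδp, hcover⟩ := exists_compl_union_neg_subset hp hU
  have hbound := ((tendsto_measureReal_twoMagDist_fst ha hβ hp hfix hδ hδp).add
    (tendsto_measureReal_twoMagDist_snd ha hβ hp hfix hδ hδp)).add
    (tendsto_measureReal_twoMagDist_mul_le_neg β ha hna (pow_pos (sub_pos.2 hδp) 2))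
  rw [add_zero, add_zero] at hbound
  refine squeeze_zero (fun n => measureReal_nonneg) (fun n => ?_) hbound
  exact (measureReal_mono hcover).trans <| (measureReal_union_le _ _).trans <|
    add_le_add_left (measureReal_union_le _ _) _

end Limits

section WeakLimit

variable {E : Type*} [TopologicalSpace E] [MeasurableSpace E] [BorelSpace E]

theorem integral_half_smul_dirac_add_dirac (f : BoundedContinuousFunction E ℝ) (x y : E) :
    ∫ z, f z ∂((2 : ENNReal)⁻¹ • (Measure.dirac x + Measure.dirac y)) = (f x + f y) / 2 := by
  rw [integral_smul_measure, integral_add_measure (f.integrable _) (f.integrable _),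
    integral_dirac' _ _ f.continuous.stronglyMeasurable,
    integral_dirac' _ _ f.continuous.stronglyMeasurable, ENNReal.toReal_inv,
    ENNReal.toReal_ofNat, smul_eq_mul, inv_mul_eq_div]

theorem norm_integral_sub_le {μ : Measure E} [IsProbabilityMeasure μ]
    (g : BoundedContinuousFunction E ℝ) {V : Set E} (hV : MeasurableSet V) {L ε : ℝ} (hε : 0 ≤ ε)
    (hg : ∀ x ∈ V, ‖g x - L‖ ≤ ε) :
    ‖∫ x, g x ∂μ - L‖ ≤ ε + ‖g - BoundedContinuousFunction.const E L‖ * μ.real Vᶜ := by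
  set h := g - BoundedContinuousFunction.const E L
  have hsub : ∫ x, h x ∂μ = ∫ x, g x ∂μ - L :=
    (integral_sub (g.integrable μ) (integrable_const L)).trans (by
      rw [integral_const, probReal_univ, one_smul])
  rw [← hsub, ← integral_add_compl hV (h.integrable μ)]
  refine (norm_add_le _ _).trans (add_le_add ?_ ?_)
  · exact (norm_setIntegral_le_of_norm_le_const (measure_lt_top μ V) hg).trans
      (mul_le_of_le_one_right hε measureReal_le_one)
  · exact norm_setIntegral_le_of_norm_le_const (measure_lt_top μ Vᶜ) fun x _ =>
      h.norm_coe_le_norm x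

variable {κ : Type*} {l : Filter κ} {μ : κ → Measure E}
  [∀ i, IsProbabilityMeasure (μ i)] {x : E}

theorem tendsto_integral_of_even [InvolutiveNeg E] [ContinuousNeg E]
    (hμ : ∀ U ∈ 𝓝 x, Tendsto (fun i => (μ i).real (U ∪ -U)ᶜ) l (𝓝 0))
    (g : BoundedContinuousFunction E ℝ) (hg : Function.Even g) :
    Tendsto (fun i => ∫ y, g y ∂(μ i)) l (𝓝 (g x)) := by
  rw [Metric.tendsto_nhds]
  intro ε hε
  set U := {y | ‖g y - g x‖ < ε / 2}
  have hUopen : IsOpen U := isOpen_lt (g.continuous.sub continuous_const).norm continuous_const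
  have hUx : U ∈ 𝓝 x := hUopen.mem_nhds (by simpa [U] using hε)
  have hUg : ∀ y ∈ U ∪ -U, ‖g y - g x‖ ≤ ε / 2 := by
    rintro y (hy | hy)
    · exact hy.le
    · rw [← hg y]
      exact hy.le
  have hsmall := (hμ U hUx).const_mul ‖g - BoundedContinuousFunction.const E (g x)‖
  rw [mul_zero] at hsmall
  filter_upwards [hsmall.eventually_lt_const (half_pos hε)] with i hi
  rw [dist_eq_norm]
  linarith [norm_integral_sub_le (μ := μ i) g (hUopen.union hUopen.neg).measurableSet
    (half_pos hε).le hUg]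

theorem tendsto_integral_of_isNegInvariant [AddGroup E] [ContinuousNeg E]
    [∀ i, (μ i).IsNegInvariant]
    (hμ : ∀ U ∈ 𝓝 x, Tendsto (fun i => (μ i).real (U ∪ -U)ᶜ) l (𝓝 0))
    (f : BoundedContinuousFunction E ℝ) :
    Tendsto (fun i => ∫ y, f y ∂(μ i)) l (𝓝 ((f x + f (-x)) / 2)) := by
  set fneg := f.compContinuous ⟨Neg.neg, continuous_neg⟩
  set g := (2⁻¹ : ℝ) • (f + fneg)
  have hg (y : E) : g y = (f y + f (-y)) / 2 := inv_mul_eq_div _ _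
  have hg_even : Function.Even g := fun y => by rw [hg, hg, neg_neg, add_comm]
  have hg_integral (i : κ) : ∫ y, g y ∂(μ i) = ∫ y, f y ∂(μ i) := by
    have hneg : ∫ y, fneg y ∂(μ i) = ∫ y, f y ∂(μ i) := integral_neg_eq_self (fun y => f y) (μ i)
    simp only [hg, integral_div]
    refine (congrArg (· / 2) ((integral_add (f.integrable _) (fneg.integrable _)).trans ?_)).trans
      (add_self_div_two _)
    rw [hneg]
  rw [← hg]
  exact (tendsto_integral_of_even hμ g hg_even).congr hg_integral

end WeakLimit

/-- Theorem 1(1): if `β > 2`, `α_N > 0`, `α_N → 0` and `N α_N → ∞`, then the distribution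
of `m^N = (m₁, m₂)` under the Gibbs measure converges weakly to
`(1/2)(δ_{(m⁺(β/2), m⁺(β/2))} + δ_{(m⁻(β/2), m⁻(β/2))})`. -/
theorem two_block_aligned_limit (β : ℝ) (hβ : 2 < β) (mp : ℝ)
    (hfix : mp = Real.tanh (β / 2 * mp))
    (hmax : ∀ z : ℝ, z = Real.tanh (β / 2 * z) → z ≤ mp)
    (α : ℕ → ℝ) (hαpos : ∀ N, 0 < α N)
    (hα0 : Tendsto α atTop (nhds 0))
    (hNα : Tendsto (fun N : ℕ => (N : ℝ) * α N) atTop atTop)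
    (f : BoundedContinuousFunction (ℝ × ℝ) ℝ) :
    Tendsto (fun n : ℕ => ∫ x, f x ∂(twoMagDist n (α (2 * n)) β)) atTop
      (nhds (∫ x, f x ∂((2 : ENNReal)⁻¹ •
        (Measure.dirac ((mp, mp) : ℝ × ℝ) + Measure.dirac ((-mp, -mp) : ℝ × ℝ))))) := by
  obtain ⟨z, hz, hz_fix⟩ := exists_pos_eq_tanh_mul (by linarith : 1 < β / 2)
  have hmp : 0 < mp := hz.trans_le (hmax z hz_fix)
  have hdouble : Tendsto (fun n : ℕ => 2 * n) atTop atTop := tendsto_id.const_mul_atTop' two_pos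
  have ha : Tendsto (fun n => α (2 * n)) atTop (𝓝 0) := hα0.comp hdouble
  have hna : Tendsto (fun n : ℕ => (n : ℝ) * α (2 * n)) atTop atTop := by
    refine ((hNα.comp hdouble).atTop_div_const two_pos).congr fun n => ?_
    simp only [Function.comp_apply, Nat.cast_mul, Nat.cast_ofNat]
    ring
  rw [integral_half_smul_dirac_add_dirac]
  exact tendsto_integral_of_isNegInvariant (x := ((mp, mp) : ℝ × ℝ)) (fun U hU =>
    tendsto_measureReal_twoMagDist_compl_union_neg ha hna (by linarith) hmp hfix hU) f

end
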